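/- There is a universal constant C such that for all positive integers N, M, all disjoint sets A, B ⊆ [M]^N, and every ε ∈ (0,1], the bounded-error quantum query complexity of distinguishing A from B satisfies Q(A,B) ≤ C · Q_ε(A,B)/ε. -/

import Mathlib

/-!
Bounded-error algorithms are obtained from algorithms with gap `ε` by a form of amplitude
estimation that needs neither angles nor Fourier transforms.

Let `V` be the `T`-query run on `X`, `φ` its initial vector and `p = ‖Π V φ‖²`. With the
reflections `S = 2 φ φ* - 1` and `R = 2 V* Π V - 1`, the vectors `u_k = (SR)^k φ` satisfy the
Chebyshev recurrence `u_{k+1} + u_{k-1} = 2 c u_k` with `c = ⟨φ, R φ⟩ = 2 p - 1`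
(`orbit_add_orbitPrev`). Conjugating by negation of the query register turns the oracle into its
inverse, so `V*` also costs `T` queries, and an ancilla `k < 2n` can control the number of
iterations: the state `∑ a_k u_k ⊗ e_k` takes `4 T n` queries (`reach_orbit`).

For a triangular window `a` this state is an approximate eigenvector, with eigenvalue `c`, of
half the adjacency matrix `H` of the path acting on the ancilla, since by the recurrence the
residual only involves the increments of `a`; its squared norm is at most `6 / n²`
(`residual_le`). Measuring the spectral projection of `H` above the midpoint of
`2 p₀ - 1 - 2 ε` and `2 p₀ - 1` therefore errs with probability at most `6 / (n ε)²`
(`exists_spectral_proj`, `exists_amplified`), and `n = ⌈5 / ε⌉` suffices.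

The infimum defining `Q_ε` is over a nonempty set because `N` queries read the whole input
(`exists_exact`).
-/

open scoped BigOperators

/-- The oracle unitary for an input `X ∈ [M]^N`: `O_X (e_i ⊗ e_j ⊗ e_w) = e_i ⊗ e_{j+x_i} ⊗ e_w`,
with addition modulo `M`. -/
noncomputable def oracleMatrix {N M W : ℕ} (X : Fin N → Fin M) :
    Matrix (Fin N × Fin M × Fin W) (Fin N × Fin M × Fin W) ℂ :=
  fun p q => if p.1 = q.1 ∧ p.2.2 = q.2.2 ∧ p.2.1 = q.2.1 + X q.1 then 1 else 0

/-- A quantum query algorithm over alphabet `[M]` on `N` variables, with workspace dimension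
`W`: an initial unit vector, unitaries `U 0, U 1, …`, and an orthogonal projection. -/
structure QAlg (N M W : ℕ) : Type where
  init : (Fin N × Fin M × Fin W) → ℂ
  init_norm : ∑ p, Complex.normSq (init p) = 1
  U : ℕ → Matrix (Fin N × Fin M × Fin W) (Fin N × Fin M × Fin W) ℂ
  U_unitary : ∀ t, U t ∈ Matrix.unitaryGroup (Fin N × Fin M × Fin W) ℂ
  proj : Matrix (Fin N × Fin M × Fin W) (Fin N × Fin M × Fin W) ℂ
  proj_herm : proj.IsHermitian
  proj_idem : proj * proj = proj

/-- The state after `t` queries: `ψ = U_t O_X U_{t-1} O_X ⋯ O_X U_0 ψ₀`. -/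
noncomputable def QAlg.state {N M W : ℕ} (A : QAlg N M W) (X : Fin N → Fin M) :
    ℕ → (Fin N × Fin M × Fin W) → ℂ
  | 0 => (A.U 0).mulVec A.init
  | t + 1 => (A.U (t + 1)).mulVec ((oracleMatrix X).mulVec (A.state X t))

/-- The acceptance probability of a `T`-query run on input `X`: `‖Π ψ_X‖²`. -/
noncomputable def QAlg.acc {N M W : ℕ} (A : QAlg N M W) (T : ℕ) (X : Fin N → Fin M) : ℝ :=
  ∑ p, Complex.normSq (A.proj.mulVec (A.state X T) p)

/-- `Q(A,B)`: the bounded-error quantum query complexity of distinguishing inputs in `A` from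
inputs in `B`. -/
noncomputable def QDist {N M : ℕ} (A B : Set (Fin N → Fin M)) : ℕ :=
  sInf {T | ∃ W : ℕ, ∃ alg : QAlg N M W,
    (∀ X ∈ A, 2 / 3 ≤ alg.acc T X) ∧ (∀ X ∈ B, alg.acc T X ≤ 1 / 3)}

/-- `Q_ε(A,B)`: the minimum `T` such that some `T`-query quantum algorithm accepts every input
in `A` with probability at least some threshold `p₀ ∈ [0,1]`, and every input in `B` with
probability at most `p₀ − ε`. -/
noncomputable def QDistEps {N M : ℕ} (ε : ℝ) (A B : Set (Fin N → Fin M)) : ℕ :=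
  sInf {T | ∃ W : ℕ, ∃ alg : QAlg N M W, ∃ p₀ : ℝ, 0 ≤ p₀ ∧ p₀ ≤ 1 ∧
    (∀ X ∈ A, p₀ ≤ alg.acc T X) ∧ (∀ X ∈ B, alg.acc T X ≤ p₀ - ε)}

/-! ### Squared norms, unitaries and permutation matrices -/

/-- The squared Euclidean norm of a complex vector given as a function. -/
noncomputable def nsq {ι : Type*} [Fintype ι] (f : ι → ℂ) : ℝ := ∑ i, Complex.normSq (f i)

theorem nsq_eq {ι : Type*} [Fintype ι] (f : ι → ℂ) : ((nsq f : ℝ) : ℂ) = star f ⬝ᵥ f := by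
  simp [nsq, dotProduct, Complex.normSq_eq_conj_mul_self]

theorem nsq_unitary {ι : Type*} [Fintype ι] [DecidableEq ι] {U : Matrix ι ι ℂ} (hU : U ∈ Matrix.unitaryGroup ι ℂ) (f : ι → ℂ) :
    nsq (U.mulVec f) = nsq f := by
  have h : ((nsq (U.mulVec f) : ℝ) : ℂ) = nsq f := by
    rw [nsq_eq, nsq_eq, Matrix.star_mulVec, Matrix.dotProduct_mulVec, Matrix.vecMul_vecMul,
      ← Matrix.star_eq_conjTranspose, Matrix.mem_unitaryGroup_iff'.1 hU, Matrix.vecMul_one]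
  exact_mod_cast h

theorem reflection_sq {ι : Type*} [Fintype ι] [DecidableEq ι] {P : Matrix ι ι ℂ} (hi : P * P = P) :
    ((2 : ℂ) • P - 1) * ((2 : ℂ) • P - 1) = 1 := by
  simp only [sub_mul, mul_sub, Matrix.smul_mul, Matrix.mul_smul, hi, mul_one, one_mul]
  module

theorem reflection_unitary {ι : Type*} [Fintype ι] [DecidableEq ι] {P : Matrix ι ι ℂ} (hh : P.IsHermitian) (hi : P * P = P) :
    (2 : ℂ) • P - 1 ∈ Matrix.unitaryGroup ι ℂ := by
  rw [Matrix.mem_unitaryGroup_iff, Matrix.star_eq_conjTranspose]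
  have : ((2 : ℂ) • P - 1).conjTranspose = (2 : ℂ) • P - 1 := by
    rw [Matrix.conjTranspose_sub, Matrix.conjTranspose_smul, hh.eq]
    simp
  rw [this, reflection_sq hi]

/-- The unitary `e_q ↦ e_{σ q}` of a permutation `σ` of the basis. -/
def permMat {ι : Type*} [DecidableEq ι] (σ : ι ≃ ι) : Matrix ι ι ℂ := fun p q => if p = σ q then 1 else 0

theorem permMat_mulVec {ι : Type*} [Fintype ι] [DecidableEq ι] (σ : ι ≃ ι) (f : ι → ℂ) :
    (permMat σ).mulVec f = fun p => f (σ.symm p) := by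
  funext p
  simp only [Matrix.mulVec, dotProduct, permMat, ite_mul, one_mul, zero_mul]
  rw [Finset.sum_eq_single (σ.symm p)]
  · simp
  · intro b _ hb
    rw [if_neg]
    rintro rfl
    simp at hb
  · simp

theorem permMat_mul {ι : Type*} [Fintype ι] [DecidableEq ι] (σ τ : ι ≃ ι) : permMat σ * permMat τ = permMat (τ.trans σ) := by
  apply Matrix.ext_of_mulVec_single
  intro i
  rw [← Matrix.mulVec_mulVec, permMat_mulVec, permMat_mulVec, permMat_mulVec]
  rfl

theorem permMat_refl {ι : Type*} [DecidableEq ι] : permMat (Equiv.refl ι) = 1 := by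
  ext p q
  rfl

theorem permMat_conjTranspose {ι : Type*} [DecidableEq ι] (σ : ι ≃ ι) : (permMat σ).conjTranspose = permMat σ.symm := by
  ext p q
  simp only [Matrix.conjTranspose_apply, permMat, apply_ite (star : ℂ → ℂ), star_one, star_zero]
  congr 1
  simp [eq_comm, Equiv.eq_symm_apply]

theorem permMat_unitary {ι : Type*} [Fintype ι] [DecidableEq ι] (σ : ι ≃ ι) : permMat σ ∈ Matrix.unitaryGroup ι ℂ := by
  rw [Matrix.mem_unitaryGroup_iff, Matrix.star_eq_conjTranspose, permMat_conjTranspose,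
    permMat_mul, Equiv.symm_trans_self, permMat_refl]

/-- A vector which is nearly an eigenvector of `H` for `c` is concentrated on the spectral
subspaces of `H` near `c`: if `Q` is the spectral projection of `H` for `[h, ∞)`, then the part
of `v` on the side of `h` away from `c` is controlled by the residual `H v - c v`. -/
theorem exists_spectral_proj {ι : Type*} [Fintype ι] [DecidableEq ι] {H : Matrix ι ι ℂ} (hH : H.IsHermitian) (h : ℝ) :
    ∃ Q : Matrix ι ι ℂ, Q.IsHermitian ∧ Q * Q = Q ∧
      (∀ v, nsq (Q.mulVec v) + nsq (v - Q.mulVec v) = nsq v) ∧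
      (∀ v (c ε : ℝ), 0 ≤ ε → h + ε ≤ c →
        ε ^ 2 * nsq (v - Q.mulVec v) ≤ nsq (H.mulVec v - (c : ℂ) • v)) ∧
      (∀ v (c ε : ℝ), 0 ≤ ε → c ≤ h - ε →
        ε ^ 2 * nsq (Q.mulVec v) ≤ nsq (H.mulVec v - (c : ℂ) • v)) := by
  classical
  set U : Matrix ι ι ℂ := hH.eigenvectorUnitary.1 with hUdef
  have hU : U ∈ Matrix.unitaryGroup ι ℂ := hH.eigenvectorUnitary.2
  have hU1 : U * U.conjTranspose = 1 := Matrix.mem_unitaryGroup_iff.1 hU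
  have hU2 : U.conjTranspose * U = 1 := Matrix.mem_unitaryGroup_iff'.1 hU
  set ev := hH.eigenvalues
  let g : ι → ℂ := fun i => if h ≤ ev i then 1 else 0
  have hHe : H = U * Matrix.diagonal (fun i => (ev i : ℂ)) * U.conjTranspose := by
    have := hH.spectral_theorem
    rw [Unitary.conjStarAlgAut_apply] at this
    exact this
  have hdiag : ∀ (d : ι → ℂ) (y : ι → ℂ),
      (U * Matrix.diagonal d * U.conjTranspose).mulVec (U.mulVec y)
        = U.mulVec (fun i => d i * y i) := by
    intro d y
    rw [Matrix.mulVec_mulVec, Matrix.mul_assoc, hU2, Matrix.mul_one, ← Matrix.mulVec_mulVec]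
    congr 1
    funext i
    simp [Matrix.mulVec_diagonal]
  have hv : ∀ v, ∃ y, v = U.mulVec y := fun v =>
    ⟨U.conjTranspose.mulVec v, by rw [Matrix.mulVec_mulVec, hU1, Matrix.one_mulVec]⟩
  have hQ : ∀ y, U.mulVec y - (U * Matrix.diagonal g * U.conjTranspose).mulVec (U.mulVec y)
        = U.mulVec (fun i => (1 - g i) * y i) := by
    intro y
    rw [hdiag, ← Matrix.mulVec_sub]
    congr 1
    funext i
    simp only [Pi.sub_apply]
    ring
  have hR : ∀ y (c : ℝ), H.mulVec (U.mulVec y) - (c : ℂ) • U.mulVec y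
        = U.mulVec (fun i => ((ev i - c : ℝ) : ℂ) * y i) := by
    intro y c
    rw [hHe, hdiag, ← Matrix.mulVec_smul, ← Matrix.mulVec_sub]
    congr 1
    funext i
    simp only [Pi.sub_apply, Pi.smul_apply, smul_eq_mul]
    push_cast
    ring
  refine ⟨U * Matrix.diagonal g * U.conjTranspose, ?_, ?_, ?_, ?_, ?_⟩
  · have hg : (Matrix.diagonal g).conjTranspose = Matrix.diagonal g := by
      rw [Matrix.diagonal_conjTranspose]
      congr 1
      funext i
      simp only [g, Pi.star_apply]
      split_ifs <;> simp
    rw [Matrix.IsHermitian, Matrix.conjTranspose_mul, Matrix.conjTranspose_mul, hg,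
      Matrix.conjTranspose_conjTranspose, Matrix.mul_assoc]
  · have hg : Matrix.diagonal g * Matrix.diagonal g = Matrix.diagonal g := by
      rw [Matrix.diagonal_mul_diagonal]
      congr 1
      funext i
      simp only [g]
      split_ifs <;> simp
    calc _ = U * Matrix.diagonal g * (U.conjTranspose * U) * Matrix.diagonal g
          * U.conjTranspose := by simp only [Matrix.mul_assoc]
      _ = _ := by rw [hU2, Matrix.mul_one, Matrix.mul_assoc U, hg]
  · intro v
    obtain ⟨y, rfl⟩ := hv v
    rw [hQ, hdiag, nsq_unitary hU, nsq_unitary hU, nsq_unitary hU, nsq, nsq, nsq,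
      ← Finset.sum_add_distrib]
    refine Finset.sum_congr rfl fun i _ => ?_
    simp only [g]
    split_ifs <;> simp
  · intro v c ε hε hc
    obtain ⟨y, rfl⟩ := hv v
    rw [hQ, hR, nsq_unitary hU, nsq_unitary hU, nsq, nsq, Finset.mul_sum]
    refine Finset.sum_le_sum fun i _ => ?_
    simp only [g, map_mul, Complex.normSq_ofReal]
    have := Complex.normSq_nonneg (y i)
    split_ifs with hi
    · simp only [sub_self, map_zero, zero_mul, mul_zero]
      exact mul_nonneg (mul_self_nonneg _) this
    · simp only [sub_zero, map_one, one_mul]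
      refine mul_le_mul_of_nonneg_right ?_ this
      nlinarith
  · intro v c ε hε hc
    obtain ⟨y, rfl⟩ := hv v
    rw [hdiag, hR, nsq_unitary hU, nsq_unitary hU, nsq, nsq, Finset.mul_sum]
    refine Finset.sum_le_sum fun i _ => ?_
    simp only [g, map_mul, Complex.normSq_ofReal]
    have := Complex.normSq_nonneg (y i)
    split_ifs with hi
    · simp only [map_one, one_mul]
      refine mul_le_mul_of_nonneg_right ?_ this
      nlinarith
    · simp only [map_zero, zero_mul, mul_zero]
      exact mul_nonneg (mul_self_nonneg _) this

/-! ### Reachable state families -/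

/-- `Reach v t f`: starting from `v`, some interleaving of fixed unitaries with exactly `t`
queries produces the state `f X` on every input `X`. -/
inductive Reach {N M W : ℕ} (v : (Fin N × Fin M × Fin W) → ℂ) :
    ℕ → ((Fin N → Fin M) → (Fin N × Fin M × Fin W) → ℂ) → Prop
  | init : Reach v 0 (fun _ => v)
  | unit {t f} (U : Matrix (Fin N × Fin M × Fin W) (Fin N × Fin M × Fin W) ℂ)
      (hU : U ∈ Matrix.unitaryGroup (Fin N × Fin M × Fin W) ℂ) (hf : Reach v t f) :
      Reach v t (fun X => U.mulVec (f X))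
  | query {t f} (hf : Reach v t f) : Reach v (t + 1) (fun X => (oracleMatrix X).mulVec (f X))

theorem state_congr {N M W : ℕ} (a b : QAlg N M W) (hi : a.init = b.init)
    (X : Fin N → Fin M) (t : ℕ) (h : ∀ s ≤ t, a.U s = b.U s) : a.state X t = b.state X t := by
  induction t with
  | zero => simp [QAlg.state, hi, h 0 le_rfl]
  | succ t ih =>
    simp only [QAlg.state]
    rw [h _ le_rfl, ih fun s hs => h s (by omega)]

theorem Reach.exists_alg {N M W : ℕ} {v : (Fin N × Fin M × Fin W) → ℂ}
    (hv : ∑ p, Complex.normSq (v p) = 1)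
    {t f} (hf : Reach v t f) {P : Matrix (Fin N × Fin M × Fin W) (Fin N × Fin M × Fin W) ℂ}
    (hP : P.IsHermitian) (hPP : P * P = P) :
    ∃ alg : QAlg N M W, alg.init = v ∧ alg.proj = P ∧ ∀ X, alg.state X t = f X := by
  induction hf with
  | init =>
    refine ⟨⟨v, hv, fun _ => 1, fun _ => one_mem _, P, hP, hPP⟩, rfl, rfl, fun X => ?_⟩
    simp [QAlg.state]
  | @unit t f U hU _ ih =>
    obtain ⟨a, hi, hp, hs⟩ := ih
    refine ⟨⟨v, hv, Function.update a.U t (U * a.U t), fun s => ?_, P, hP, hPP⟩, rfl, rfl,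
      fun X => ?_⟩
    · by_cases h : s = t
      · subst h
        simpa using mul_mem hU (a.U_unitary s)
      · simpa [h] using a.U_unitary s
    · change _ = Matrix.mulVec _ _
      rw [← hs X]
      cases t with
      | zero => simp [QAlg.state, hi, Matrix.mulVec_mulVec]
      | succ t =>
        simp only [QAlg.state, Function.update_self, ← Matrix.mulVec_mulVec]
        congr 3
        refine state_congr _ _ hi.symm X t fun s hs => ?_
        exact Function.update_of_ne (by omega) _ _
  | @query t f _ ih =>
    obtain ⟨a, hi, hp, hs⟩ := ih
    refine ⟨⟨v, hv, Function.update a.U (t + 1) 1, fun s => ?_, P, hP, hPP⟩, rfl, rfl,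
      fun X => ?_⟩
    · by_cases h : s = t + 1
      · subst h
        simp [one_mem]
      · simpa [h] using a.U_unitary s
    · change _ = Matrix.mulVec _ _
      rw [← hs X]
      simp only [QAlg.state, Function.update_self, Matrix.one_mulVec]
      congr 1
      refine state_congr _ _ hi.symm X t fun s hs => ?_
      exact Function.update_of_ne (by omega) _ _

/-- The permutation of the basis underlying the oracle. -/
def oraclePerm {N M W : ℕ} [NeZero M] (X : Fin N → Fin M) :
    (Fin N × Fin M × Fin W) ≃ (Fin N × Fin M × Fin W) where
  toFun p := (p.1, p.2.1 + X p.1, p.2.2)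
  invFun p := (p.1, p.2.1 - X p.1, p.2.2)
  left_inv p := by simp
  right_inv p := by simp

theorem oracleMatrix_eq {N M W : ℕ} [NeZero M] (X : Fin N → Fin M) :
    oracleMatrix (W := W) X = permMat (oraclePerm X) := by
  ext p q
  simp only [oracleMatrix, permMat, oraclePerm, Equiv.coe_fn_mk, Prod.ext_iff]
  congr 1
  apply propext
  tauto

/-- Negation of the query register; it conjugates the oracle into its inverse. -/
def negPerm {N M W : ℕ} [NeZero M] :
    (Fin N × Fin M × Fin W) ≃ (Fin N × Fin M × Fin W) where
  toFun p := (p.1, -p.2.1, p.2.2)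
  invFun p := (p.1, -p.2.1, p.2.2)
  left_inv p := by simp
  right_inv p := by simp

theorem oracleMatrix_unitary {N M W : ℕ} [NeZero M] (X : Fin N → Fin M) :
    oracleMatrix (W := W) X ∈ Matrix.unitaryGroup (Fin N × Fin M × Fin W) ℂ := by
  rw [oracleMatrix_eq]
  exact permMat_unitary _

/-- The inverse oracle costs a single query. -/
theorem oracleMatrix_conjTranspose {N M W : ℕ} [NeZero M] (X : Fin N → Fin M) :
    (oracleMatrix (W := W) X).conjTranspose
      = permMat negPerm * (oracleMatrix X * permMat negPerm) := by
  rw [oracleMatrix_eq, permMat_conjTranspose, permMat_mul, permMat_mul]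
  congr 1
  ext1 p
  simp [oraclePerm, negPerm, sub_eq_add_neg, add_comm]

/-! ### Reading the whole input -/

/-- One step of the reading procedure: with index register `i`, the answer `j` is exchanged with
the `i`-th cell of the memory and the index is advanced cyclically. -/
def readPerm {N M : ℕ} [NeZero N] :
    (Fin N × Fin M × (Fin N → Fin M)) ≃ (Fin N × Fin M × (Fin N → Fin M)) where
  toFun p := (p.1 + 1, p.2.2 p.1, Function.update p.2.2 p.1 p.2.1)
  invFun p := (p.1 - 1, p.2.2 (p.1 - 1), Function.update p.2.2 (p.1 - 1) p.2.1)
  left_inv p := by simp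
  right_inv p := by simp

theorem permMat_single {ι : Type*} [Fintype ι] [DecidableEq ι] (σ : ι ≃ ι) (q : ι) :
    (permMat σ).mulVec (Pi.single q 1) = Pi.single (σ q) 1 := by
  rw [permMat_mulVec]
  funext p
  simp [Pi.single_apply, Equiv.symm_apply_eq]

theorem reach_read {N M W : ℕ} [NeZero N] [NeZero M] (g : (Fin N → Fin M) ≃ Fin W) (t : ℕ)
    (ht : t ≤ N) :
    Reach (Pi.single ((0 : Fin N), (0 : Fin M), g 0) (1 : ℂ)) t (fun X =>
      Pi.single (Fin.ofNat N t, 0, g fun i => if i.val < t then X i else 0) 1) := by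
  induction t with
  | zero =>
    simp only [not_lt_zero, if_false]
    exact Reach.init
  | succ t ih =>
    let e := (Equiv.refl (Fin N)).prodCongr ((Equiv.refl (Fin M)).prodCongr g)
    have h := ((ih (by omega)).query).unit _
      (permMat_unitary ((e.symm.trans readPerm).trans e))
    convert h using 2 with X
    rw [oracleMatrix_eq, permMat_single, permMat_single]
    congr 1
    have hv : (Fin.ofNat N t).val = t := by simp [Fin.ofNat, Nat.mod_eq_of_lt (show t < N by omega)]
    simp only [oraclePerm, readPerm, e, Equiv.trans_apply, Equiv.coe_fn_mk,
      Equiv.prodCongr_symm, Equiv.prodCongr_apply, Prod.map, Equiv.refl_symm, Equiv.refl_apply,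
      Equiv.symm_apply_apply, hv, lt_irrefl, if_false, zero_add]
    refine Prod.ext ?_ (Prod.ext rfl ?_)
    · simp only
      ext
      simp [Fin.val_add, Fin.ofNat, Nat.add_mod]
    · simp only
      congr 1
      funext i
      by_cases hi : i = Fin.ofNat N t
      · rw [hi, Function.update_self, hv, if_pos (Nat.lt_succ_self t)]
      · have : i.val ≠ t := fun h' => hi (Fin.ext (by rw [hv, h']))
        rw [Function.update_of_ne hi]
        by_cases h2 : i.val < t
        · simp [h2, Nat.lt_succ_of_lt h2]
        · have : ¬ i.val < t + 1 := by omega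
          simp [h2, this]

/-- `N` queries decide membership in `A` with certainty, so `Q_ε(A,B)` is a minimum over a
nonempty set. -/
theorem exists_exact {N M : ℕ} [NeZero N] [NeZero M] (A : Set (Fin N → Fin M)) :
    ∃ W : ℕ, ∃ alg : QAlg N M W,
      (∀ X ∈ A, alg.acc N X = 1) ∧ (∀ X ∉ A, alg.acc N X = 0) := by
  classical
  let g := Fintype.equivFin (Fin N → Fin M)
  let d : Fin N × Fin M × Fin (Fintype.card (Fin N → Fin M)) → ℂ :=
    fun p => if g.symm p.2.2 ∈ A then 1 else 0
  have hv : nsq (Pi.single ((0 : Fin N), (0 : Fin M), g 0) (1 : ℂ)) = 1 := by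
    simp [nsq, Pi.single_apply, apply_ite Complex.normSq]
  obtain ⟨alg, -, hp, hs⟩ := (reach_read g N le_rfl).exists_alg hv (P := Matrix.diagonal d)
    (by
      rw [Matrix.IsHermitian, Matrix.diagonal_conjTranspose]
      congr 1
      funext i
      simp only [d, Pi.star_apply]
      split_ifs <;> simp)
    (by
      rw [Matrix.diagonal_mul_diagonal]
      congr 1
      funext i
      simp only [d]
      split_ifs <;> simp)
  have key : ∀ X, alg.acc N X = if X ∈ A then 1 else 0 := by
    intro X
    rw [QAlg.acc, hp, hs X]
    simp only [Fin.is_lt, if_true, Matrix.mulVec_diagonal]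
    rw [Finset.sum_eq_single (Fin.ofNat N N, 0, g X)]
    · simp only [d, Pi.single_eq_same, Equiv.symm_apply_apply]
      split_ifs <;> simp
    · intro b _ hb
      rw [Pi.single_eq_of_ne hb]
      simp
    · simp
  exact ⟨_, alg, fun X h => by simp [key, h], fun X h => by simp [key, h]⟩

/-! ### Block-diagonal programs controlled by an ancilla -/

/-- A workspace of dimension `W * K` viewed as a workspace of dimension `W` with an ancilla of
dimension `K`. -/
def blockEquiv (N M W K : ℕ) :
    (Fin N × Fin M × Fin W) × Fin K ≃ Fin N × Fin M × Fin (W * K) :=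
  (Equiv.prodAssoc _ _ _).trans ((Equiv.refl _).prodCongr
    ((Equiv.prodAssoc _ _ _).trans ((Equiv.refl _).prodCongr finProdFinEquiv)))

/-- The vector `∑ k, f k ⊗ e_k` of the space extended by the ancilla. -/
def flat {N M W K : ℕ} (f : Fin K → (Fin N × Fin M × Fin W) → ℂ) :
    (Fin N × Fin M × Fin (W * K)) → ℂ :=
  fun p => f ((blockEquiv N M W K).symm p).2 ((blockEquiv N M W K).symm p).1

theorem flat_apply {N M W K : ℕ} (f : Fin K → (Fin N × Fin M × Fin W) → ℂ) (s k) :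
    flat f (blockEquiv N M W K (s, k)) = f k s := by
  simp [flat]

/-- A matrix on the product with the ancilla, as a matrix on the extended workspace. -/
def lift {N M W K : ℕ}
    (A : Matrix ((Fin N × Fin M × Fin W) × Fin K) ((Fin N × Fin M × Fin W) × Fin K) ℂ) :
    Matrix (Fin N × Fin M × Fin (W * K)) (Fin N × Fin M × Fin (W * K)) ℂ :=
  A.submatrix (blockEquiv N M W K).symm (blockEquiv N M W K).symm

theorem lift_mul {N M W K : ℕ}
    (A B : Matrix ((Fin N × Fin M × Fin W) × Fin K) ((Fin N × Fin M × Fin W) × Fin K) ℂ) :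
    lift A * lift B = lift (A * B) :=
  Matrix.submatrix_mul_equiv _ _ _ _ _

theorem lift_mulVec {N M W K : ℕ}
    (A : Matrix ((Fin N × Fin M × Fin W) × Fin K) ((Fin N × Fin M × Fin W) × Fin K) ℂ)
    (f : Fin K → (Fin N × Fin M × Fin W) → ℂ) (s k) :
    (lift A).mulVec (flat f) (blockEquiv N M W K (s, k)) = A.mulVec (fun q => f q.2 q.1) (s, k) := by
  rw [lift, Matrix.submatrix_mulVec_equiv]
  simp only [Function.comp, Equiv.symm_apply_apply, Equiv.symm_symm]
  congr 1
  funext q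
  exact flat_apply f q.1 q.2

theorem lift_block_mulVec {N M W K : ℕ}
    (A : Fin K → Matrix (Fin N × Fin M × Fin W) (Fin N × Fin M × Fin W) ℂ)
    (f : Fin K → (Fin N × Fin M × Fin W) → ℂ) :
    (lift (Matrix.blockDiagonal A)).mulVec (flat f) = flat fun k => (A k).mulVec (f k) := by
  funext p
  obtain ⟨⟨s, k⟩, rfl⟩ := (blockEquiv N M W K).surjective p
  rw [lift_mulVec, flat_apply]
  simp only [Matrix.mulVec, dotProduct, Fintype.sum_prod_type_right, Matrix.blockDiagonal_apply,
    ite_mul, zero_mul]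
  rw [Finset.sum_eq_single k]
  · simp
  · intro b _ hb
    simp [hb.symm]
  · simp

theorem lift_block_unitary {N M W K : ℕ}
    (A : Fin K → Matrix (Fin N × Fin M × Fin W) (Fin N × Fin M × Fin W) ℂ)
    (hA : ∀ k, A k ∈ Matrix.unitaryGroup (Fin N × Fin M × Fin W) ℂ) :
    lift (Matrix.blockDiagonal A) ∈ Matrix.unitaryGroup (Fin N × Fin M × Fin (W * K)) ℂ := by
  have h : (lift (Matrix.blockDiagonal A)).conjTranspose
      = lift (Matrix.blockDiagonal fun k => (A k).conjTranspose) := by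
    rw [lift, Matrix.conjTranspose_submatrix, Matrix.blockDiagonal_conjTranspose]
    rfl
  rw [Matrix.mem_unitaryGroup_iff, Matrix.star_eq_conjTranspose, h, lift_mul,
    ← Matrix.blockDiagonal_mul]
  have : (fun k => A k * (A k).conjTranspose) = 1 := by
    funext k
    exact Matrix.mem_unitaryGroup_iff.1 (hA k)
  rw [this, Matrix.blockDiagonal_one, lift, Matrix.submatrix_one_equiv]

theorem Reach.block {N M W K t : ℕ} {v} {f : (Fin N → Fin M) → Fin K → (Fin N × Fin M × Fin W) → ℂ}
    (h : Reach v t fun X => flat (f X))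
    (A : Fin K → Matrix (Fin N × Fin M × Fin W) (Fin N × Fin M × Fin W) ℂ)
    (hA : ∀ k, A k ∈ Matrix.unitaryGroup (Fin N × Fin M × Fin W) ℂ) :
    Reach v t fun X => flat fun k => (A k).mulVec (f X k) := by
  have := h.unit _ (lift_block_unitary A hA)
  simpa only [lift_block_mulVec] using this

theorem Reach.blockQuery {N M W K t : ℕ} [NeZero M] {v}
    {f : (Fin N → Fin M) → Fin K → (Fin N × Fin M × Fin W) → ℂ}
    (h : Reach v t fun X => flat (f X)) :
    Reach v (t + 1) fun X => flat fun k => (oracleMatrix X).mulVec (f X k) := by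
  convert h.query using 2 with X
  simp only [oracleMatrix_eq, permMat_mulVec]
  rfl

/-- The unitary carrying the initial state to `state X t`. -/
noncomputable def QAlg.run {N M W : ℕ} (A : QAlg N M W) (X : Fin N → Fin M) :
    ℕ → Matrix (Fin N × Fin M × Fin W) (Fin N × Fin M × Fin W) ℂ
  | 0 => A.U 0
  | t + 1 => A.U (t + 1) * (oracleMatrix X * A.run X t)

theorem QAlg.run_mulVec {N M W : ℕ} (A : QAlg N M W) (X : Fin N → Fin M) (t : ℕ) :
    (A.run X t).mulVec A.init = A.state X t := by
  induction t with
  | zero => rfl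
  | succ t ih => simp only [QAlg.run, QAlg.state, ← ih, Matrix.mulVec_mulVec]

theorem QAlg.run_unitary {N M W : ℕ} [NeZero M] (A : QAlg N M W) (X : Fin N → Fin M) (t : ℕ) :
    A.run X t ∈ Matrix.unitaryGroup (Fin N × Fin M × Fin W) ℂ := by
  induction t with
  | zero => exact A.U_unitary 0
  | succ t ih => exact mul_mem (A.U_unitary _) (mul_mem (oracleMatrix_unitary X) ih)

theorem Reach.run {N M W K t : ℕ} [NeZero M] {v} (A : QAlg N M W)
    {f : (Fin N → Fin M) → Fin K → (Fin N × Fin M × Fin W) → ℂ}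
    (h : Reach v t fun X => flat (f X)) (T : ℕ) :
    Reach v (t + T) fun X => flat fun k => (A.run X T).mulVec (f X k) := by
  induction T with
  | zero => exact h.block (fun _ => A.U 0) fun _ => A.U_unitary 0
  | succ T ih =>
    have := ih.blockQuery.block (fun _ => A.U (T + 1)) fun _ => A.U_unitary (T + 1)
    rw [← Nat.add_assoc]
    simpa only [QAlg.run, Matrix.mulVec_mulVec] using this

theorem Reach.runInv {N M W K t : ℕ} [NeZero M] {v} (A : QAlg N M W) (T : ℕ)
    {f : (Fin N → Fin M) → Fin K → (Fin N × Fin M × Fin W) → ℂ}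
    (h : Reach v t fun X => flat (f X)) :
    Reach v (t + T) fun X => flat fun k => (A.run X T).conjTranspose.mulVec (f X k) := by
  have hU : ∀ t, (A.U t).conjTranspose ∈ Matrix.unitaryGroup (Fin N × Fin M × Fin W) ℂ :=
    fun t => Unitary.star_mem (A.U_unitary t)
  induction T generalizing t f with
  | zero => exact h.block (fun _ => (A.U 0).conjTranspose) fun _ => hU 0
  | succ T ih =>
    have h1 := h.block (fun _ => (A.U (T + 1)).conjTranspose) fun _ => hU _
    have h2 := (h1.block (fun _ => permMat negPerm) fun _ => permMat_unitary _).blockQuery.block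
      (fun _ => permMat negPerm) fun _ => permMat_unitary _
    have h3 := ih h2
    rw [show t + (T + 1) = t + 1 + T by ring]
    simpa only [QAlg.run, Matrix.conjTranspose_mul, oracleMatrix_conjTranspose,
      Matrix.mulVec_mulVec, Matrix.mul_assoc] using h3

/-! ### The product of two reflections -/

/-- The reflection about the line spanned by `φ`. -/
noncomputable def reflLine {ι : Type*} [DecidableEq ι] (φ : ι → ℂ) : Matrix ι ι ℂ :=
  (2 : ℂ) • Matrix.vecMulVec φ (star φ) - 1

theorem reflLine_mulVec {ι : Type*} [Fintype ι] [DecidableEq ι] (φ y : ι → ℂ) :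
    (reflLine φ).mulVec y = (2 * (star φ ⬝ᵥ y)) • φ - y := by
  rw [reflLine, Matrix.sub_mulVec, Matrix.one_mulVec, Matrix.smul_mulVec,
    Matrix.vecMulVec_mulVec]
  funext i
  simp
  ring

theorem reflLine_unitary {ι : Type*} [Fintype ι] [DecidableEq ι] {φ : ι → ℂ} (h : nsq φ = 1) :
    reflLine φ ∈ Matrix.unitaryGroup ι ℂ := by
  have h1 : star φ ⬝ᵥ φ = 1 := by rw [← nsq_eq, h]; simp
  apply reflection_unitary
  · rw [Matrix.IsHermitian, Matrix.conjTranspose_vecMulVec, star_star]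
  · rw [Matrix.vecMulVec_mul_vecMulVec, h1]
    simp

/-- The orbit `u_k = (SR)^k φ`, where `S` is the reflection about `φ`. -/
noncomputable def orbit {ι : Type*} [Fintype ι] [DecidableEq ι] (φ : ι → ℂ) (R : Matrix ι ι ℂ)
    (k : ℕ) : ι → ℂ :=
  ((reflLine φ * R) ^ k).mulVec φ

/-- The orbit shifted by one step: `w_k = (SR)^k R φ`, which is `u_{k-1}` with `u_{-1} = Rφ`. -/
noncomputable def orbitPrev {ι : Type*} [Fintype ι] [DecidableEq ι] (φ : ι → ℂ)
    (R : Matrix ι ι ℂ) (k : ℕ) : ι → ℂ :=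
  ((reflLine φ * R) ^ k).mulVec (R.mulVec φ)

theorem orbitPrev_succ {ι : Type*} [Fintype ι] [DecidableEq ι] {φ : ι → ℂ} {R : Matrix ι ι ℂ}
    (h : nsq φ = 1) (hR : R * R = 1) (k : ℕ) : orbitPrev φ R (k + 1) = orbit φ R k := by
  have h1 : star φ ⬝ᵥ φ = 1 := by rw [← nsq_eq, h]; simp
  have h2 : (reflLine φ).mulVec φ = φ := by
    rw [reflLine_mulVec, h1]
    funext i
    simp
    ring
  rw [orbitPrev, orbit, pow_succ, ← Matrix.mulVec_mulVec, ← Matrix.mulVec_mulVec,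
    Matrix.mulVec_mulVec φ R R, hR, Matrix.one_mulVec, h2]

/-- The Chebyshev recurrence `u_{k+1} + u_{k-1} = 2 c u_k` with `c = ⟨φ, R φ⟩`. -/
theorem orbit_add_orbitPrev {ι : Type*} [Fintype ι] [DecidableEq ι] {φ : ι → ℂ}
    {R : Matrix ι ι ℂ} {c : ℂ} (hc : star φ ⬝ᵥ R.mulVec φ = c) (k : ℕ) :
    orbit φ R (k + 1) + orbitPrev φ R k = (2 * c) • orbit φ R k := by
  rw [orbit, orbitPrev, orbit, pow_succ, ← Matrix.mulVec_mulVec, ← Matrix.mulVec_add,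
    ← Matrix.mulVec_mulVec, reflLine_mulVec, hc, sub_add_cancel, Matrix.mulVec_smul]

theorem nsq_orbit {ι : Type*} [Fintype ι] [DecidableEq ι] {φ : ι → ℂ} {R : Matrix ι ι ℂ}
    (h : nsq φ = 1) (hR : R ∈ Matrix.unitaryGroup ι ℂ) (k : ℕ) :
    nsq (orbit φ R k) = 1 ∧ nsq (orbitPrev φ R k) = 1 := by
  have := pow_mem (mul_mem (reflLine_unitary h) hR) k
  rw [orbit, orbitPrev, nsq_unitary this, nsq_unitary this, nsq_unitary hR]
  exact ⟨h, h⟩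

/-! ### The window state as an approximate eigenvector of the path -/

/-- Half the adjacency matrix of the path on `K` vertices. -/
noncomputable def pathMat (K : ℕ) : Matrix (Fin K) (Fin K) ℂ :=
  fun k l => (if l.val + 1 = k.val then 1 / 2 else 0) + (if l.val = k.val + 1 then 1 / 2 else 0)

theorem pathMat_herm (K : ℕ) : (pathMat K).IsHermitian := by
  ext k l
  simp only [Matrix.conjTranspose_apply, pathMat, star_add,
    apply_ite (star : ℂ → ℂ), star_zero]
  rw [add_comm]
  have : star (1 / 2 : ℂ) = 1 / 2 := by simp
  rw [this]
  congr 1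
  · congr 1
    exact propext eq_comm
  · congr 1
    exact propext eq_comm

theorem pathMat_mulVec (K : ℕ) (z : ℕ → ℂ) (h0 : z 0 = 0) (hK : z (K + 1) = 0) (k : Fin K) :
    (pathMat K).mulVec (fun l => z (l.val + 1)) k = (z k.val + z (k.val + 2)) / 2 := by
  simp only [Matrix.mulVec, dotProduct, pathMat, add_mul, Finset.sum_add_distrib, ite_mul,
    zero_mul]
  have h1 : ∑ l : Fin K, (if l.val + 1 = k.val then 1 / 2 * z (l.val + 1) else 0)
      = z k.val / 2 := by
    rw [Fin.sum_univ_eq_sum_range (fun l => if l + 1 = k.val then 1 / 2 * z (l + 1) else 0) K]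
    obtain ⟨k, hk⟩ := k
    cases k with
    | zero => simp [h0]
    | succ k =>
      simp only [add_left_inj]
      rw [Finset.sum_ite_eq' (Finset.range K) k, if_pos (Finset.mem_range.2 (by omega))]
      ring
  have h2 : ∑ l : Fin K, (if l.val = k.val + 1 then 1 / 2 * z (l.val + 1) else 0)
      = z (k.val + 2) / 2 := by
    rw [Fin.sum_univ_eq_sum_range (fun l => if l = k.val + 1 then 1 / 2 * z (l + 1) else 0) K,
      Finset.sum_ite_eq' (Finset.range K) (k.val + 1)]
    split_ifs with h
    · ring_nf
    · have : k.val + 2 = K + 1 := by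
        have := k.2
        rw [Finset.mem_range] at h
        omega
      rw [this, hK]
      simp
  rw [h1, h2]
  ring

/-- The triangular window on `0, …, 2n + 1`, vanishing at both ends. -/
def window (n j : ℕ) : ℝ := min (j : ℝ) (2 * n + 1 - j)

theorem window_succ (n j : ℕ) : |window n (j + 1) - window n j| ≤ 1 := by
  refine (abs_min_sub_min_le_max _ _ _ _).trans ?_
  push_cast
  refine max_le ?_ ?_ <;> rw [abs_le] <;> constructor <;> linarith

theorem window_sum (n : ℕ) :
    (n : ℝ) ^ 3 / 3 ≤ ∑ k : Fin (2 * n), window n (k.val + 1) ^ 2 := by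
  rw [Fin.sum_univ_eq_sum_range (fun k => window n (k + 1) ^ 2) (2 * n)]
  calc (n : ℝ) ^ 3 / 3 ≤ ∑ k ∈ Finset.range n, ((k : ℝ) + 1) ^ 2 := by
        induction n with
        | zero => simp
        | succ n ih =>
          rw [Finset.sum_range_succ]
          push_cast
          have : (0 : ℝ) ≤ n := n.cast_nonneg
          nlinarith
    _ = ∑ k ∈ Finset.range n, window n (k + 1) ^ 2 := by
        refine Finset.sum_congr rfl fun k hk => ?_
        have : (k : ℝ) + 1 ≤ n := by exact_mod_cast Finset.mem_range.1 hk
        rw [window, min_eq_left]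
        · push_cast; rfl
        · push_cast; linarith
    _ ≤ _ := Finset.sum_le_sum_of_subset_of_nonneg
        (Finset.range_subset_range.2 (by omega)) fun _ _ _ => sq_nonneg _

theorem normSq_comb_le (x y : ℝ) (hx : |x| ≤ 1) (hy : |y| ≤ 1) (a b : ℂ) :
    Complex.normSq (((x : ℂ) * a + (y : ℂ) * b) / 2)
      ≤ (Complex.normSq a + Complex.normSq b) / 2 := by
  have hx2 : x ^ 2 ≤ 1 := by rwa [sq_le_one_iff_abs_le_one]
  have hy2 : y ^ 2 ≤ 1 := by rwa [sq_le_one_iff_abs_le_one]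
  rw [map_div₀]
  simp only [Complex.normSq_apply, Complex.add_re, Complex.add_im, Complex.mul_re,
    Complex.mul_im, Complex.ofReal_re, Complex.ofReal_im, zero_mul, sub_zero, add_zero,
    Complex.re_ofNat, Complex.im_ofNat]
  nlinarith [sq_nonneg (x * a.re - y * b.re), sq_nonneg (x * a.im - y * b.im),
    mul_le_mul_of_nonneg_right hx2 (sq_nonneg a.re), mul_le_mul_of_nonneg_right hx2 (sq_nonneg a.im),
    mul_le_mul_of_nonneg_right hy2 (sq_nonneg b.re), mul_le_mul_of_nonneg_right hy2 (sq_nonneg b.im)]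

/-- The vector `r • ∑ k, a_k u_k ⊗ e_k`, with `a` the triangular window, is an approximate
eigenvector of the path with eigenvalue `c`: in the residual the recurrence for `u` leaves only
increments of the window. -/
theorem residual_le {ι : Type*} [Fintype ι] [DecidableEq ι] {φ : ι → ℂ} {R : Matrix ι ι ℂ}
    (h : nsq φ = 1) (hR : R ∈ Matrix.unitaryGroup ι ℂ) (hRR : R * R = 1) {c : ℝ}
    (hc : star φ ⬝ᵥ R.mulVec φ = (c : ℂ)) (n : ℕ) (r : ℝ) :
    ∑ i, nsq ((pathMat (2 * n)).mulVec (fun k => ((r * window n (k.val + 1) : ℝ) : ℂ)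
          * orbit φ R k i)
        - (c : ℂ) • fun k : Fin (2 * n) => ((r * window n (k.val + 1) : ℝ) : ℂ) * orbit φ R k i)
      ≤ r ^ 2 * (2 * n) := by
  have key : ∀ (i : ι) (k : Fin (2 * n)),
      ((pathMat (2 * n)).mulVec (fun k => ((r * window n (k.val + 1) : ℝ) : ℂ)
          * orbit φ R k i)
        - (c : ℂ) • fun k : Fin (2 * n) => ((r * window n (k.val + 1) : ℝ) : ℂ) * orbit φ R k i) k
      = (r : ℂ) * ((((window n k - window n (k + 1) : ℝ) : ℂ) * orbitPrev φ R k i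
          + ((window n (k + 1 + 1) - window n (k + 1) : ℝ) : ℂ) * orbit φ R (k + 1) i) / 2) := by
    intro i k
    -- `orbitPrev` shifts the index so that the vertex `0` carries `u_{-1}`.
    have h1 := pathMat_mulVec (2 * n)
      (fun j => ((r * window n j : ℝ) : ℂ) * orbitPrev φ R j i)
      (by
        have : window n 0 = 0 := by
          have : (0 : ℝ) ≤ n := n.cast_nonneg
          rw [window, min_eq_left] <;> push_cast <;> linarith
        simp [this])
      (by
        have : window n (2 * n + 1) = 0 := by
          have : (0 : ℝ) ≤ n := n.cast_nonneg
          rw [window, min_eq_right] <;> push_cast <;> linarith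
        simp [this]) k
    simp only [orbitPrev_succ h hRR] at h1
    have h2 := congrFun (orbit_add_orbitPrev hc k.val) i
    simp only [Pi.add_apply, Pi.smul_apply, smul_eq_mul] at h2
    rw [Pi.sub_apply, h1]
    simp only [Pi.smul_apply, smul_eq_mul]
    push_cast
    linear_combination (r : ℂ) * (window n (k + 1) : ℂ) / 2 * h2
  have hn := nsq_orbit h hR
  simp only [nsq, key]
  rw [Finset.sum_comm]
  calc _ ≤ ∑ k : Fin (2 * n), ∑ i, r ^ 2 * ((Complex.normSq (orbitPrev φ R k i)
            + Complex.normSq (orbit φ R (k + 1) i)) / 2) := by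
        refine Finset.sum_le_sum fun k _ => Finset.sum_le_sum fun i _ => ?_
        rw [map_mul, Complex.normSq_ofReal, ← pow_two]
        refine mul_le_mul_of_nonneg_left (normSq_comb_le _ _ ?_ ?_ _ _) (sq_nonneg r)
        · rw [abs_sub_comm]
          exact window_succ n k
        · exact window_succ n (k + 1)
    _ = ∑ k : Fin (2 * n), r ^ 2 * ((nsq (orbitPrev φ R k) + nsq (orbit φ R (k + 1))) / 2) := by
        refine Finset.sum_congr rfl fun k _ => ?_
        rw [← Finset.mul_sum, ← Finset.sum_div, Finset.sum_add_distrib]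
        rfl
    _ = _ := by
        simp only [hn]
        simp
        ring

/-! ### The amplified algorithm -/

/-- The reflection `2 V* Π V - 1`, where `V` is the run of the algorithm on `X`. -/
noncomputable def QAlg.refl {N M W : ℕ} (A : QAlg N M W) (T : ℕ) (X : Fin N → Fin M) :
    Matrix (Fin N × Fin M × Fin W) (Fin N × Fin M × Fin W) ℂ :=
  (A.run X T).conjTranspose * (((2 : ℂ) • A.proj - 1) * A.run X T)

theorem QAlg.refl_unitary {N M W : ℕ} [NeZero M] (A : QAlg N M W) (T : ℕ) (X : Fin N → Fin M) :
    A.refl T X ∈ Matrix.unitaryGroup (Fin N × Fin M × Fin W) ℂ :=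
  mul_mem (Unitary.star_mem (A.run_unitary X T))
    (mul_mem (reflection_unitary A.proj_herm A.proj_idem) (A.run_unitary X T))

theorem QAlg.refl_sq {N M W : ℕ} [NeZero M] (A : QAlg N M W) (T : ℕ) (X : Fin N → Fin M) :
    A.refl T X * A.refl T X = 1 := by
  have h1 : A.run X T * (A.run X T).conjTranspose = 1 :=
    Matrix.mem_unitaryGroup_iff.1 (A.run_unitary X T)
  have h2 : (A.run X T).conjTranspose * A.run X T = 1 :=
    Matrix.mem_unitaryGroup_iff'.1 (A.run_unitary X T)
  calc _ = (A.run X T).conjTranspose * (((2 : ℂ) • A.proj - 1)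
        * (A.run X T * (A.run X T).conjTranspose) * ((2 : ℂ) • A.proj - 1)) * A.run X T := by
        simp only [QAlg.refl, Matrix.mul_assoc]
    _ = 1 := by rw [h1, Matrix.mul_one, reflection_sq A.proj_idem, Matrix.mul_one, h2]

theorem QAlg.refl_inner {N M W : ℕ} [NeZero M] (A : QAlg N M W) (T : ℕ) (X : Fin N → Fin M) :
    star A.init ⬝ᵥ (A.refl T X).mulVec A.init = ((2 * A.acc T X - 1 : ℝ) : ℂ) := by
  have h1 : nsq (A.state X T) = 1 := by
    rw [← A.run_mulVec, nsq_unitary (A.run_unitary X T)]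
    exact A.init_norm
  have h2 : ((A.acc T X : ℝ) : ℂ) = star (A.state X T) ⬝ᵥ A.proj.mulVec (A.state X T) := by
    change ((nsq (A.proj.mulVec (A.state X T)) : ℝ) : ℂ) = _
    rw [nsq_eq, Matrix.star_mulVec, A.proj_herm.eq, ← Matrix.dotProduct_mulVec,
      Matrix.mulVec_mulVec, A.proj_idem]
  have h3 : star (A.state X T) ⬝ᵥ A.state X T = 1 := by rw [← nsq_eq, h1]; simp
  rw [QAlg.refl, ← Matrix.mulVec_mulVec, ← Matrix.mulVec_mulVec, A.run_mulVec,
    Matrix.dotProduct_mulVec, ← Matrix.star_mulVec, A.run_mulVec, Matrix.sub_mulVec,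
    Matrix.one_mulVec, dotProduct_sub, h3, Matrix.smul_mulVec, dotProduct_smul, ← h2]
  simp

/-- Controlled on the ancilla value `k`, the product of reflections is applied `min m k` times.
Only the two reflections need the control: the runs `V` and `V*` around them cancel in the
blocks where the reflections are omitted. -/
theorem reach_orbit {N M W K : ℕ} [NeZero M] (A : QAlg N M W) (T : ℕ) (a : Fin K → ℂ) (m : ℕ) :
    Reach (flat fun k => a k • A.init) (2 * T * m)
      (fun X => flat fun k => a k • orbit A.init (A.refl T X) (min m k.val)) := by
  induction m with
  | zero =>
    simp only [Nat.zero_min, orbit, pow_zero, Matrix.one_mulVec]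
    exact Reach.init
  | succ m ih =>
    have h1 := (((ih.run A T).block (fun k => if m < k.val then (2 : ℂ) • A.proj - 1 else 1)
      fun k => by
        split_ifs
        · exact reflection_unitary A.proj_herm A.proj_idem
        · exact one_mem _).runInv A T).block
      (fun k => if m < k.val then reflLine A.init else 1) fun k => by
        split_ifs
        · exact reflLine_unitary A.init_norm
        · exact one_mem _
    rw [show 2 * T * (m + 1) = 2 * T * m + T + T by ring]
    convert h1 using 4 with X k
    split_ifs with hk
    · rw [Nat.min_eq_left (show m + 1 ≤ k.val from hk), Nat.min_eq_left hk.le, orbit, orbit,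
        pow_succ']
      simp only [Matrix.mulVec_smul, Matrix.mulVec_mulVec, QAlg.refl, Matrix.mul_assoc]
    · have h2 : (A.run X T).conjTranspose * A.run X T = 1 :=
        Matrix.mem_unitaryGroup_iff'.1 (A.run_unitary X T)
      rw [Nat.min_eq_right (by omega), Nat.min_eq_right (by omega), Matrix.one_mulVec,
        Matrix.one_mulVec, Matrix.mulVec_mulVec, h2, Matrix.one_mulVec]

theorem nsq_flat {N M W K : ℕ} (f : Fin K → (Fin N × Fin M × Fin W) → ℂ) :
    nsq (flat f) = ∑ s, nsq fun k => f k s := by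
  rw [nsq, ← (blockEquiv N M W K).sum_comp, Fintype.sum_prod_type]
  simp only [flat_apply]
  rfl

/-- An algorithm with gap `ε` yields, for every `n`, one with `4 T n` queries whose error
probability is at most `6 / (n ε)²`. -/
theorem exists_amplified {N M W : ℕ} [NeZero M] (A : QAlg N M W) (T : ℕ) (p₀ ε : ℝ)
    (hε : 0 < ε) (n : ℕ) (hn : 0 < n) :
    ∃ W' : ℕ, ∃ alg : QAlg N M W',
      (∀ X, p₀ ≤ A.acc T X → 1 - 6 / (n * ε) ^ 2 ≤ alg.acc (2 * T * (2 * n)) X) ∧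
      (∀ X, A.acc T X ≤ p₀ - ε → alg.acc (2 * T * (2 * n)) X ≤ 6 / (n * ε) ^ 2) := by
  obtain ⟨Q, hQh, hQi, hQs, hQ1, hQ2⟩ := exists_spectral_proj (pathMat_herm (2 * n))
    (2 * p₀ - 1 - ε)
  have hn0 : (0 : ℝ) < n := by exact_mod_cast hn
  set Z := ∑ k : Fin (2 * n), window n (k.val + 1) ^ 2 with hZ
  have hZn : (n : ℝ) ^ 3 / 3 ≤ Z := window_sum n
  have hZ0 : 0 < Z := lt_of_lt_of_le (by positivity) hZn
  set r : ℝ := (Real.sqrt Z)⁻¹ with hr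
  have hr2 : r ^ 2 * Z = 1 := by
    rw [hr, inv_pow, Real.sq_sqrt hZ0.le, inv_mul_cancel₀ hZ0.ne']
  let a : Fin (2 * n) → ℂ := fun k => ((r * window n (k.val + 1) : ℝ) : ℂ)
  -- The window state is normalized for every family of unit vectors.
  have hnorm : ∀ u : ℕ → (Fin N × Fin M × Fin W) → ℂ, (∀ k, nsq (u k) = 1) →
      ∑ s, nsq (fun k : Fin (2 * n) => a k * u k s) = 1 := by
    intro u hu
    simp only [nsq, map_mul] at hu ⊢
    rw [Finset.sum_comm]
    simp only [← Finset.mul_sum, hu, mul_one, a, Complex.normSq_ofReal]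
    rw [← hr2, hZ, Finset.mul_sum]
    exact Finset.sum_congr rfl fun k _ => by ring
  have hv : nsq (flat fun k => a k • A.init) = 1 := by
    rw [nsq_flat]
    exact hnorm (fun _ => A.init) fun _ => A.init_norm
  have hP1 : (lift (N := N) (M := M) (W := W)
      (Matrix.kroneckerMap (fun x y => x * y) (1 : Matrix (Fin N × Fin M × Fin W) _ ℂ) Q)).IsHermitian := by
    apply Matrix.IsHermitian.submatrix
    rw [Matrix.IsHermitian, Matrix.conjTranspose_kronecker, Matrix.conjTranspose_one, hQh.eq]
  obtain ⟨alg, -, hp, hs⟩ := (reach_orbit A T a (2 * n)).exists_alg hv hP1 (by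
    rw [lift_mul, ← Matrix.mul_kronecker_mul, hQi, Matrix.one_mul])
  let ψ : (Fin N → Fin M) → (Fin N × Fin M × Fin W) → Fin (2 * n) → ℂ :=
    fun X s k => a k * orbit A.init (A.refl T X) k s
  have hacc : ∀ X, alg.acc (2 * T * (2 * n)) X = ∑ s, nsq (Q.mulVec (ψ X s)) := by
    intro X
    rw [QAlg.acc, hp, hs, ← (blockEquiv N M W (2 * n)).sum_comp, Fintype.sum_prod_type]
    refine Finset.sum_congr rfl fun s _ => Finset.sum_congr rfl fun k _ => ?_
    rw [lift_mulVec]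
    congr 1
    simp only [Matrix.mulVec, dotProduct, Matrix.kroneckerMap_apply]
    rw [Fintype.sum_prod_type, Finset.sum_eq_single s]
    · refine Finset.sum_congr rfl fun l _ => ?_
      rw [Nat.min_eq_right l.2.le]
      simp [ψ]
    · intro b _ hb
      simp [Matrix.one_apply_ne hb.symm]
    · simp
  have hres : ∀ X, ∑ s, nsq ((pathMat (2 * n)).mulVec (ψ X s)
      - ((2 * A.acc T X - 1 : ℝ) : ℂ) • ψ X s) ≤ 6 / n ^ 2 := by
    intro X
    refine (residual_le A.init_norm (A.refl_unitary T X) (A.refl_sq T X)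
      (A.refl_inner T X) n r).trans ?_
    have : r ^ 2 = 1 / Z := by rw [eq_div_iff hZ0.ne', hr2]
    rw [this, div_mul_eq_mul_div, div_le_div_iff₀ hZ0 (by positivity)]
    nlinarith
  have hε2 : 0 < ε ^ 2 := by positivity
  have hdiv : ∀ x : ℝ, ε ^ 2 * x ≤ 6 / n ^ 2 → x ≤ 6 / (n * ε) ^ 2 := by
    intro x hx
    rw [mul_pow, ← div_div, le_div_iff₀ hε2]
    linarith
  refine ⟨_, alg, fun X hX => ?_, fun X hX => ?_⟩
  · have h1 : ∑ s, nsq (Q.mulVec (ψ X s)) + ∑ s, nsq (ψ X s - Q.mulVec (ψ X s)) = 1 := by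
      rw [← Finset.sum_add_distrib, ← hnorm (orbit A.init (A.refl T X))
        fun k => (nsq_orbit A.init_norm (A.refl_unitary T X) k).1]
      exact Finset.sum_congr rfl fun s _ => hQs _
    have h2 : ∑ s, nsq (ψ X s - Q.mulVec (ψ X s)) ≤ 6 / (n * ε) ^ 2 := by
      refine hdiv _ (le_trans ?_ (hres X))
      rw [Finset.mul_sum]
      exact Finset.sum_le_sum fun s _ => hQ1 _ _ _ hε.le (by linarith)
    rw [hacc]
    linarith
  · rw [hacc]
    refine hdiv _ (le_trans ?_ (hres X))
    rw [Finset.mul_sum]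
    exact Finset.sum_le_sum fun s _ => hQ2 _ _ _ hε.le (by linarith)

/-- amplification: `Q(A,B) = O(Q_ε(A,B)/ε)` for all disjoint `A, B ⊆ [M]^N`
and all `ε ∈ (0,1]`. -/
theorem amplify_small_bias :
    ∃ C : ℝ, 0 < C ∧
      ∀ (N M : ℕ), 0 < N → 0 < M →
        ∀ A B : Set (Fin N → Fin M), Disjoint A B →
          ∀ ε : ℝ, 0 < ε → ε ≤ 1 →
            (QDist A B : ℝ) ≤ C * (QDistEps ε A B : ℝ) / ε := by
  refine ⟨24, by norm_num, fun N M hN hM A B hAB ε hε hε1 => ?_⟩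
  have : NeZero N := ⟨hN.ne'⟩
  have : NeZero M := ⟨hM.ne'⟩
  -- Without an admissible algorithm `sInf` would be the junk value `0`.
  have hne : {T | ∃ W : ℕ, ∃ alg : QAlg N M W, ∃ p₀ : ℝ, 0 ≤ p₀ ∧ p₀ ≤ 1 ∧
      (∀ X ∈ A, p₀ ≤ alg.acc T X) ∧ (∀ X ∈ B, alg.acc T X ≤ p₀ - ε)}.Nonempty := by
    obtain ⟨W, alg, h1, h0⟩ := exists_exact A
    refine ⟨N, W, alg, 1, zero_le_one, le_rfl, fun X hX => (h1 X hX).ge, fun X hX => ?_⟩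
    rw [h0 X (Set.disjoint_right.1 hAB hX)]
    linarith
  obtain ⟨W, alg, p₀, -, -, hA, hB⟩ := Nat.sInf_mem hne
  change ∀ X ∈ A, p₀ ≤ alg.acc (QDistEps ε A B) X at hA
  change ∀ X ∈ B, alg.acc (QDistEps ε A B) X ≤ p₀ - ε at hB
  -- `n ε ≥ 5` makes the error `6 / (n ε)²` smaller than `1 / 3`.
  set n := ⌈5 / ε⌉₊ with hn
  have hn5 : 5 ≤ n * ε := by
    rw [← div_le_iff₀ hε]
    exact Nat.le_ceil _
  have hn6 : (n : ℝ) ≤ 6 / ε := by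
    have h1 : (n : ℝ) < 5 / ε + 1 := Nat.ceil_lt_add_one (by positivity)
    have h2 : 1 ≤ 1 / ε := by rwa [le_div_iff₀ hε, one_mul]
    have h3 : 6 / ε = 5 / ε + 1 / ε := by ring
    linarith
  have hn0 : 0 < n := Nat.ceil_pos.2 (by positivity)
  have herr : 6 / (n * ε) ^ 2 ≤ 1 / 3 := by
    rw [div_le_div_iff₀ (by positivity) (by norm_num)]
    nlinarith
  obtain ⟨W', alg', h1, h2⟩ := exists_amplified alg (QDistEps ε A B) p₀ ε hε n hn0
  have hle : QDist A B ≤ 2 * QDistEps ε A B * (2 * n) :=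
    Nat.sInf_le ⟨W', alg', fun X hX => by linarith [h1 X (hA X hX)],
      fun X hX => (h2 X (hB X hX)).trans herr⟩
  calc (QDist A B : ℝ) ≤ 2 * QDistEps ε A B * (2 * n) := by exact_mod_cast hle
    _ ≤ 2 * QDistEps ε A B * (2 * (6 / ε)) := by gcongr
    _ = 24 * QDistEps ε A B / ε := by ring
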